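/- Let f: ℝ → [0,∞) be a nondecreasing right-continuous function vanishing on (−∞,0), and suppose that the function ε(t) := f(t) − a·t, t ≥ 0, for some a > 0, satisfies ∫_{[0,∞)} y |dε(y)| < ∞, where |dε| denotes the total variation measure of ε. Then γ₀ := lim_{t→∞}(f(t) − a·t) exists and is finite, and for every integer-valued function j = j(t) ≥ 1 such that j(t) = o(t^{2/3}) as t → ∞, the convolution powers satisfy f^{∗(j(t))}(t) ~ (a^{j(t)}·t^{j(t)}/j(t)!)·exp(γ₀·j(t)²/(a·t)) as t → ∞. -/

import Mathlib

open MeasureTheory Filter Set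
open scoped ENNReal NNReal Topology

noncomputable section

/-- `j`-fold convolution power of a measure on `ℝ` (Dirac mass at `0` for `j = 0`). -/
def convPow (μ : Measure ℝ) : ℕ → Measure ℝ
  | 0 => Measure.dirac 0
  | n + 1 => Measure.map (fun p : ℝ × ℝ => p.1 + p.2) ((convPow μ n).prod μ)

open Classical in
/-- The Lebesgue–Stieltjes measure of a monotone function (junk value `0` otherwise). -/
def lsMeasure (f : ℝ → ℝ) : Measure ℝ :=
  if hf : Monotone f then hf.stieltjesFunction.measure else 0

/-- The `j`-fold Lebesgue–Stieltjes convolution power `f^{∗(j)}(t)` of a nondecreasing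
right-continuous function `f` vanishing on the negative half-line. -/
def convPowFun (f : ℝ → ℝ) (j : ℕ) (t : ℝ) : ℝ :=
  ((convPow (lsMeasure f) j) (Iic t)).toReal

/-!
Compare `μ = lsMeasure f` with the measure `κ` whose distribution function is the ramp
`a (t + γ₀ / a)⁺`. Both have the same linear asymptotics and the moment condition makes
`F_μ - F_κ` integrable. Since `κ` is a multiple of Lebesgue measure on a half-line,
`(μ - κ) ∗ κ` then has a bounded distribution function. Turning `μ^{∗j}` into `κ^{∗j}` one factor
at a time, every exchange but the one on `μ^{∗j}` itself takes place next to a factor `κ`, and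
costs a relative error `O((j / t)²)`, because removing a factor `κ` from `κ^{∗n}(t)` costs a
factor `O(j / t)`; the remaining exchange costs `O(j / t)`. The total error is
`O(j³ / t² + j / t) = o(1)`.
Finally `κ^{∗j}(t) = a^j (t + j γ₀ / a)^j / j!` is explicit, and `(1 + j γ₀ / (a t))^j` is
asymptotic to `exp (γ₀ j² / (a t))`, again because `j³ = o(t²)`.
-/

/-- Measures carried, up to a null set, by a half-line `(b, ∞)` and finite on every `(-∞, t]`.
Convolution preserves this class, and on it `μ.real (Iic t)` never takes the junk value of an
infinite measure. -/
structure IsLeftBounded (μ : Measure ℝ) : Prop where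
  measure_Iic_ne_top : ∀ t, μ (Iic t) ≠ ⊤
  exists_measure_Iic_eq_zero : ∃ b, μ (Iic b) = 0

/-- The distribution functions of `μ` and `κ` differ by at most `k`, and agree on `(-∞, -d)`. -/
def CdfClose (k d : ℝ) (μ κ : Measure ℝ) : Prop :=
  ∀ t, |μ.real (Iic t) - κ.real (Iic t)| ≤ (Ici (-d)).indicator (fun _ => k) t

/-- The measure whose distribution function is the ramp `t ↦ a (t + c)⁺`, for `0 ≤ a`. -/
def rampMeasure (a c : ℝ) : Measure ℝ :=
  ENNReal.ofReal a • volume.restrict (Ioi (-c))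

/-- The distribution function of the convolution of `i` copies of `μ` and `m` copies of `κ`. -/
def mixedCdf (μ κ : Measure ℝ) (i m : ℕ) (t : ℝ) : ℝ :=
  (convPow μ i ∗ convPow κ m).real (Iic t)

theorem convPow_succ (μ : Measure ℝ) (n : ℕ) : convPow μ (n + 1) = convPow μ n ∗ μ := rfl

theorem convPow_one (μ : Measure ℝ) [SFinite μ] : convPow μ 1 = μ := by
  rw [convPow_succ, convPow, Measure.dirac_zero_conv]

instance sFinite_convPow (μ : Measure ℝ) [SFinite μ] (n : ℕ) : SFinite (convPow μ n) := by
  induction n with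
  | zero => rw [convPow]; infer_instance
  | succ n ih => rw [convPow_succ]; infer_instance

instance sFinite_rampMeasure (a c : ℝ) : SFinite (rampMeasure a c) := by
  unfold rampMeasure; infer_instance

instance sFinite_lsMeasure (f : ℝ → ℝ) : SFinite (lsMeasure f) := by
  unfold lsMeasure; split_ifs <;> infer_instance

theorem conv_Iic (μ ν : Measure ℝ) [SFinite ν] (t : ℝ) :
    (μ ∗ ν) (Iic t) = ∫⁻ x, ν (Iic (t - x)) ∂μ := by
  rw [← lintegral_indicator_one measurableSet_Iic,
    Measure.lintegral_conv (measurable_one.indicator measurableSet_Iic)]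
  refine lintegral_congr fun x => ?_
  rw [← lintegral_indicator_one measurableSet_Iic]
  refine lintegral_congr fun y => ?_
  simp only [indicator, mem_Iic, le_sub_iff_add_le', Pi.one_apply]

theorem measurable_measure_Iic_sub (μ : Measure ℝ) (t : ℝ) :
    Measurable fun x => μ (Iic (t - x)) :=
  Antitone.measurable fun _ _ h => measure_mono (Iic_subset_Iic.2 (sub_le_sub_left h t))

namespace IsLeftBounded

variable {μ ν κ : Measure ℝ}

theorem dirac (x : ℝ) : IsLeftBounded (Measure.dirac x) where
  measure_Iic_ne_top _ := measure_ne_top _ _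
  exists_measure_Iic_eq_zero := ⟨x - 1, by simp [Measure.dirac_apply' _ measurableSet_Iic]⟩

theorem conv [SFinite ν] (hμ : IsLeftBounded μ) (hν : IsLeftBounded ν) :
    IsLeftBounded (μ ∗ ν) := by
  obtain ⟨b, hb⟩ := hμ.exists_measure_Iic_eq_zero
  obtain ⟨b', hb'⟩ := hν.exists_measure_Iic_eq_zero
  have hlt : ∀ᵐ x ∂μ, b < x := by
    filter_upwards [measure_eq_zero_iff_ae_notMem.1 hb] with x hx using not_le.1 hx
  refine ⟨fun t => ne_top_of_le_ne_top
    (ENNReal.mul_ne_top (hν.measure_Iic_ne_top (t - b)) (hμ.measure_Iic_ne_top (t - b'))) ?_,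
    b + b', ?_⟩
  · rw [conv_Iic, ← lintegral_indicator_const measurableSet_Iic]
    refine lintegral_mono_ae ?_
    filter_upwards [hlt] with x hx
    rcases le_or_gt x (t - b') with h | h
    · rw [indicator_of_mem (mem_Iic.2 h)]
      exact measure_mono (Iic_subset_Iic.2 (by linarith))
    · rw [measure_mono_null (Iic_subset_Iic.2 (by linarith)) hb']
      exact zero_le
  · rw [conv_Iic, lintegral_eq_zero_iff (measurable_measure_Iic_sub ν _)]
    filter_upwards [hlt] with x hx
    exact measure_mono_null (Iic_subset_Iic.2 (by linarith)) hb'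

theorem convPow [SFinite μ] (hμ : IsLeftBounded μ) (n : ℕ) : IsLeftBounded (convPow μ n) := by
  induction n with
  | zero => exact dirac 0
  | succ n ih => exact ih.conv hμ

theorem real_Iic_mono (hμ : IsLeftBounded μ) : Monotone fun t => μ.real (Iic t) :=
  fun _ t h => measureReal_mono (Iic_subset_Iic.2 h) (hμ.measure_Iic_ne_top t)

theorem conv_real_Iic [SFinite μ] (hμ : IsLeftBounded μ) (ν : Measure ℝ) (t : ℝ) :
    (ν ∗ μ).real (Iic t) = ∫ x, μ.real (Iic (t - x)) ∂ν := by
  rw [measureReal_def, conv_Iic]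
  exact (integral_toReal (measurable_measure_Iic_sub μ t).aemeasurable
    (Eventually.of_forall fun x => (hμ.measure_Iic_ne_top _).lt_top)).symm

theorem integrable_real_Iic_sub [SFinite μ] (hν : IsLeftBounded ν) (hμ : IsLeftBounded μ)
    (t : ℝ) : Integrable (fun x => μ.real (Iic (t - x))) ν :=
  integrable_toReal_of_lintegral_ne_top (measurable_measure_Iic_sub μ t).aemeasurable
    (conv_Iic ν μ t ▸ (hν.conv hμ).measure_Iic_ne_top t)

theorem conv_real_Iic_sub [SFinite μ] [SFinite κ] (hν : IsLeftBounded ν) (hμ : IsLeftBounded μ)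
    (hκ : IsLeftBounded κ) (t : ℝ) :
    (ν ∗ μ).real (Iic t) - (ν ∗ κ).real (Iic t)
      = ∫ x, (μ.real (Iic (t - x)) - κ.real (Iic (t - x))) ∂ν := by
  rw [hμ.conv_real_Iic, hκ.conv_real_Iic,
    integral_sub (hν.integrable_real_Iic_sub hμ t) (hν.integrable_real_Iic_sub hκ t)]

end IsLeftBounded

namespace CdfClose

variable {μ ν κ : Measure ℝ} {k d : ℝ}

theorem nonneg (h : CdfClose k d μ κ) : 0 ≤ k :=
  (abs_nonneg _).trans ((h (-d)).trans_eq (indicator_of_mem self_mem_Ici _))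

theorem abs_conv_sub_le [SFinite μ] [SFinite κ] (h : CdfClose k d μ κ) (hν : IsLeftBounded ν)
    (hμ : IsLeftBounded μ) (hκ : IsLeftBounded κ) (t : ℝ) :
    |(ν ∗ μ).real (Iic t) - (ν ∗ κ).real (Iic t)| ≤ k * ν.real (Iic (t + d)) := by
  have hind : ∀ x, (Ici (-d)).indicator (fun _ => k) (t - x)
      = (Iic (t + d)).indicator (fun _ => k) x := fun x => by
    simp only [indicator, mem_Ici, mem_Iic, neg_le_sub_iff_le_add]
  have hint : Integrable ((Iic (t + d)).indicator fun _ => k) ν :=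
    (integrableOn_const (hν.measure_Iic_ne_top _)).integrable_indicator measurableSet_Iic
  calc |(ν ∗ μ).real (Iic t) - (ν ∗ κ).real (Iic t)|
      = ‖∫ x, (μ.real (Iic (t - x)) - κ.real (Iic (t - x))) ∂ν‖ := by
        rw [hν.conv_real_Iic_sub hμ hκ, Real.norm_eq_abs]
    _ ≤ ∫ x, (Iic (t + d)).indicator (fun _ => k) x ∂ν :=
        norm_integral_le_of_norm_le hint
          (Eventually.of_forall fun x => (h _).trans_eq (hind x))
    _ = k * ν.real (Iic (t + d)) := by
        rw [integral_indicator_const _ measurableSet_Iic, smul_eq_mul, mul_comm]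

end CdfClose

section Exchange

variable {μ κ : Measure ℝ} [SFinite μ] [SFinite κ] {k K W d : ℝ}

theorem mixedCdf_zero_right (μ κ : Measure ℝ) [SFinite μ] (i : ℕ) (t : ℝ) :
    mixedCdf μ κ i 0 t = (convPow μ i).real (Iic t) := by
  rw [mixedCdf, convPow, Measure.conv_dirac_zero]

theorem mixedCdf_zero_left (μ κ : Measure ℝ) [SFinite κ] (m : ℕ) (t : ℝ) :
    mixedCdf μ κ 0 m t = (convPow κ m).real (Iic t) := by
  rw [mixedCdf, convPow, Measure.dirac_zero_conv]

theorem abs_mixedCdf_exchange_le (h : CdfClose k d (μ ∗ κ) (κ ∗ κ)) (hμ : IsLeftBounded μ)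
    (hκ : IsLeftBounded κ) (i m : ℕ) (t : ℝ) :
    |mixedCdf μ κ (i + 1) (m + 1) t - mixedCdf μ κ i (m + 2) t|
      ≤ k * mixedCdf μ κ i m (t + d) := by
  have hleft : convPow μ (i + 1) ∗ convPow κ (m + 1) = (convPow μ i ∗ convPow κ m) ∗ (μ ∗ κ) := by
    rw [convPow_succ, convPow_succ, Measure.conv_assoc, Measure.conv_assoc,
      ← Measure.conv_assoc μ, Measure.conv_comm μ, Measure.conv_assoc]
  have hright : convPow μ i ∗ convPow κ (m + 2) = (convPow μ i ∗ convPow κ m) ∗ (κ ∗ κ) := by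
    rw [convPow_succ, convPow_succ, Measure.conv_assoc, Measure.conv_assoc]
  rw [mixedCdf, mixedCdf, hleft, hright]
  exact h.abs_conv_sub_le ((hμ.convPow i).conv (hκ.convPow m)) (hμ.conv hκ) (hκ.conv hκ) t

theorem abs_mixedCdf_exchange_last_le (h : CdfClose k d μ κ) (hμ : IsLeftBounded μ)
    (hκ : IsLeftBounded κ) (i : ℕ) (t : ℝ) :
    |mixedCdf μ κ (i + 1) 0 t - mixedCdf μ κ i 1 t| ≤ k * mixedCdf μ κ i 0 (t + d) := by
  rw [mixedCdf_zero_right, mixedCdf_zero_right, mixedCdf, convPow_one, convPow_succ]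
  exact h.abs_conv_sub_le (hμ.convPow i) hμ hκ t

theorem dist_zero_le_of_exchange {α : Type*} [PseudoMetricSpace α] {g : ℕ → ℕ → α} {n : ℕ}
    {A B : ℝ} (hA : 0 ≤ A) (hB : 0 ≤ B)
    (hmix : ∀ i m, i + m + 2 = n → dist (g (i + 1) (m + 1)) (g i (m + 2)) ≤ A)
    (hlast : ∀ i, i + 1 = n → dist (g (i + 1) 0) (g i 1) ≤ B) {i m : ℕ} (him : i + m = n) :
    dist (g i m) (g 0 n) ≤ n * A + B := by
  have hpos : ∀ i m, i + (m + 1) = n → dist (g i (m + 1)) (g 0 n) ≤ i * A := by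
    intro i
    induction i with
    | zero => intro m hm; simp [← hm]
    | succ i ih =>
      intro m hm
      calc dist (g (i + 1) (m + 1)) (g 0 n)
          ≤ dist (g (i + 1) (m + 1)) (g i (m + 2)) + dist (g i (m + 2)) (g 0 n) :=
            dist_triangle _ _ _
        _ ≤ A + i * A := add_le_add (hmix i m (by omega)) (ih (m + 1) (by omega))
        _ = (i + 1 : ℕ) * A := by push_cast; ring
  have hle : ∀ {i}, i ≤ n → (i : ℝ) * A ≤ n * A := fun h => by gcongr
  rcases m with _ | m
  · rcases i with _ | i
    · rw [← him, dist_self]; positivity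
    · calc dist (g (i + 1) 0) (g 0 n)
          ≤ dist (g (i + 1) 0) (g i 1) + dist (g i 1) (g 0 n) := dist_triangle _ _ _
        _ ≤ B + n * A :=
            add_le_add (hlast i him) ((hpos i 0 him).trans (hle (by omega)))
        _ = n * A + B := add_comm _ _
  · linarith [hpos i m him, hle (i := i) (by omega)]

theorem abs_mixedCdf_sub_le_of_le_two_mul {b s : ℝ} {n : ℕ} (hμ : IsLeftBounded μ)
    (hκ : IsLeftBounded κ) (hW : CdfClose W d μ κ) (hK : CdfClose K d (μ ∗ κ) (κ ∗ κ))
    (hd : 0 ≤ d) (hb : 0 ≤ b)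
    (hratio : ∀ k < n, (convPow κ k).real (Iic (s + d)) ≤ b * (convPow κ (k + 1)).real (Iic s))
    (hdouble : ∀ i m, i + m < n →
      mixedCdf μ κ i m (s + d) ≤ 2 * (convPow κ (i + m)).real (Iic (s + d)))
    {i m : ℕ} (him : i + m = n) :
    |mixedCdf μ κ i m s - (convPow κ n).real (Iic s)|
      ≤ (n * (K * (2 * b ^ 2)) + W * (2 * b)) * (convPow κ n).real (Iic s) := by
  have hK0 := hK.nonneg
  have hW0 := hW.nonneg
  set H := (convPow κ n).real (Iic s) with hH
  have hmix : ∀ i m, i + m + 2 = n →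
      |mixedCdf μ κ (i + 1) (m + 1) s - mixedCdf μ κ i (m + 2) s| ≤ K * (2 * (b ^ 2 * H)) := by
    intro i m h
    have hstep : (convPow κ (i + m)).real (Iic (s + d)) ≤ b ^ 2 * H :=
      calc (convPow κ (i + m)).real (Iic (s + d))
          ≤ b * (convPow κ (i + m + 1)).real (Iic s) := hratio _ (by omega)
        _ ≤ b * (convPow κ (i + m + 1)).real (Iic (s + d)) :=
            mul_le_mul_of_nonneg_left ((hκ.convPow _).real_Iic_mono (by linarith)) hb
        _ ≤ b * (b * H) := by
            rw [hH, ← h]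
            gcongr
            exact hratio _ (by omega)
        _ = b ^ 2 * H := by ring
    refine (abs_mixedCdf_exchange_le hK hμ hκ i m s).trans ?_
    gcongr
    linarith [hdouble i m (by omega)]
  have hlast : ∀ i, i + 1 = n →
      |mixedCdf μ κ (i + 1) 0 s - mixedCdf μ κ i 1 s| ≤ W * (2 * (b * H)) := by
    intro i h
    have hstep : (convPow κ i).real (Iic (s + d)) ≤ b * H := by
      rw [hH, ← h]
      exact hratio _ (by omega)
    refine (abs_mixedCdf_exchange_last_le hW hμ hκ i s).trans ?_
    gcongr
    exact (hdouble i 0 (by omega)).trans (mul_le_mul_of_nonneg_left hstep zero_le_two)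
  have h : |mixedCdf μ κ i m s - mixedCdf μ κ 0 n s|
      ≤ n * (K * (2 * (b ^ 2 * H))) + W * (2 * (b * H)) :=
    dist_zero_le_of_exchange (g := fun i m => mixedCdf μ κ i m s)
      (by positivity) (by positivity) hmix hlast him
  rw [mixedCdf_zero_left] at h
  linarith

theorem abs_mixedCdf_sub_le {b q T : ℝ} {N : ℕ} (hμ : IsLeftBounded μ) (hκ : IsLeftBounded κ)
    (hW : CdfClose W d μ κ) (hK : CdfClose K d (μ ∗ κ) (κ ∗ κ)) (hd : 0 ≤ d) (hb : 0 ≤ b)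
    (hratio : ∀ n < N, ∀ s, T ≤ s →
      (convPow κ n).real (Iic (s + d)) ≤ b * (convPow κ (n + 1)).real (Iic s))
    (hq : N * (K * (2 * b ^ 2)) + W * (2 * b) ≤ q) (hq1 : q ≤ 1)
    {n : ℕ} (hn : n ≤ N) {i m : ℕ} (him : i + m = n) {s : ℝ} (hs : T ≤ s) :
    |mixedCdf μ κ i m s - (convPow κ n).real (Iic s)| ≤ q * (convPow κ n).real (Iic s) := by
  induction n using Nat.strong_induction_on generalizing i m s with
  | _ n IH =>
  have hK0 := hK.nonneg
  have hdouble : ∀ i m, i + m < n →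
      mixedCdf μ κ i m (s + d) ≤ 2 * (convPow κ (i + m)).real (Iic (s + d)) := by
    intro i m hlt
    have h := (abs_le.1 (IH (i + m) hlt (by omega) rfl (s := s + d) (by linarith))).2
    have h0 : 0 ≤ (convPow κ (i + m)).real (Iic (s + d)) := measureReal_nonneg
    nlinarith
  calc |mixedCdf μ κ i m s - (convPow κ n).real (Iic s)|
      ≤ (n * (K * (2 * b ^ 2)) + W * (2 * b)) * (convPow κ n).real (Iic s) :=
        abs_mixedCdf_sub_le_of_le_two_mul hμ hκ hW hK hd hb
          (fun k hk => hratio k (by omega) s hs) hdouble him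
    _ ≤ (N * (K * (2 * b ^ 2)) + W * (2 * b)) * (convPow κ n).real (Iic s) := by gcongr
    _ ≤ q * (convPow κ n).real (Iic s) := by gcongr

end Exchange

section Ramp

variable {a c : ℝ}

theorem rampMeasure_real_Iic (ha : 0 ≤ a) (c t : ℝ) :
    (rampMeasure a c).real (Iic t) = a * max (t + c) 0 := by
  rw [rampMeasure, measureReal_ennreal_smul_apply, ENNReal.toReal_ofReal ha,
    measureReal_restrict_apply measurableSet_Iic, inter_comm, Ioi_inter_Iic,
    measureReal_def, Real.volume_Ioc, ENNReal.toReal_ofReal', sub_neg_eq_add]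

theorem isLeftBounded_rampMeasure (a c : ℝ) : IsLeftBounded (rampMeasure a c) where
  measure_Iic_ne_top t := by
    rw [rampMeasure, Measure.smul_apply, Measure.restrict_apply measurableSet_Iic, inter_comm,
      Ioi_inter_Iic, Real.volume_Ioc]
    exact ENNReal.mul_ne_top ENNReal.ofReal_ne_top ENNReal.ofReal_ne_top
  exists_measure_Iic_eq_zero := ⟨-c, by
    rw [rampMeasure, Measure.smul_apply, Measure.restrict_apply measurableSet_Iic, inter_comm,
      Ioi_inter_Iic, Ioc_self, measure_empty, smul_zero]⟩

theorem integral_rampMeasure (ha : 0 ≤ a) (c : ℝ) (g : ℝ → ℝ) :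
    ∫ x, g x ∂rampMeasure a c = a * ∫ x in Ioi (-c), g x := by
  rw [rampMeasure, integral_smul_measure, ENNReal.toReal_ofReal ha, smul_eq_mul]

theorem setIntegral_Ioi_max_sub_pow (b y : ℝ) {n : ℕ} (hn : n ≠ 0) :
    ∫ x in Ioi b, max (y - x) 0 ^ n = max (y - b) 0 ^ (n + 1) / (n + 1) := by
  have hind : (fun x => max (y - x) 0 ^ n) = (Iic y).indicator fun x => (y - x) ^ n := by
    ext x
    rcases le_total x y with h | h
    · rw [indicator_of_mem (mem_Iic.2 h), max_eq_left (by linarith)]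
    · rw [max_eq_right (by linarith), zero_pow hn, indicator_apply]
      split_ifs with h'
      · rw [le_antisymm h' h, sub_self, zero_pow hn]
      · rfl
  rw [hind, setIntegral_indicator measurableSet_Iic, Ioi_inter_Iic]
  rcases le_total b y with h | h
  · rw [← intervalIntegral.integral_of_le h,
      intervalIntegral.integral_comp_sub_left fun u => u ^ n, integral_pow,
      max_eq_left (by linarith)]
    simp
  · rw [Ioc_eq_empty (not_lt.2 h), max_eq_right (by linarith)]
    simp

theorem convPow_rampMeasure_real_Iic (ha : 0 ≤ a) (c : ℝ) {n : ℕ} (hn : n ≠ 0) (t : ℝ) :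
    (convPow (rampMeasure a c) n).real (Iic t)
      = a ^ n / n.factorial * max (t + n * c) 0 ^ n := by
  induction n, Nat.one_le_iff_ne_zero.2 hn using Nat.le_induction generalizing t with
  | base => rw [convPow_one, rampMeasure_real_Iic ha]; simp
  | succ n hn' ih =>
    have hn0 : n ≠ 0 := Nat.one_le_iff_ne_zero.1 hn'
    rw [convPow_succ, Measure.conv_comm,
      ((isLeftBounded_rampMeasure a c).convPow n).conv_real_Iic, integral_rampMeasure ha]
    simp_rw [ih hn0, sub_add_eq_add_sub]
    rw [integral_const_mul, setIntegral_Ioi_max_sub_pow _ _ hn0, Nat.factorial_succ,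
      show t + n * c - -c = t + (n + 1 : ℕ) * c by push_cast; ring]
    push_cast
    field_simp
    ring

/-- `(μ - κ) ∗ κ` has density `a (F_μ - F_κ)` translated by `c`, hence a bounded distribution
function as soon as `F_μ - F_κ` is integrable. -/
theorem cdfClose_conv_rampMeasure {μ : Measure ℝ} [SFinite μ] {d : ℝ} (ha : 0 ≤ a)
    (hμ : IsLeftBounded μ)
    (hint : Integrable fun t => μ.real (Iic t) - (rampMeasure a c).real (Iic t))
    (hzero : ∀ t < c - d, μ.real (Iic t) - (rampMeasure a c).real (Iic t) = 0) :
    CdfClose (a * ∫ t, |μ.real (Iic t) - (rampMeasure a c).real (Iic t)|) d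
      (μ ∗ rampMeasure a c) (rampMeasure a c ∗ rampMeasure a c) := by
  intro t
  have hκ := isLeftBounded_rampMeasure a c
  set r : ℝ → ℝ := fun t => μ.real (Iic t) - (rampMeasure a c).real (Iic t)
  rw [Measure.conv_comm μ, hκ.conv_real_Iic_sub hμ hκ, integral_rampMeasure ha]
  change |a * ∫ x in Ioi (-c), r (t - x)| ≤ _
  rcases lt_or_ge t (-d) with ht | ht
  · rw [setIntegral_eq_zero_of_forall_eq_zero fun x hx => hzero _ (by linarith [mem_Ioi.1 hx]),
      mul_zero, abs_zero, indicator_of_notMem (notMem_Ici.2 ht)]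
  · rw [abs_mul, abs_of_nonneg ha, indicator_of_mem (mem_Ici.2 ht)]
    gcongr
    calc |∫ x in Ioi (-c), r (t - x)|
        ≤ ∫ x in Ioi (-c), |r (t - x)| := abs_integral_le_integral_abs
      _ ≤ ∫ x, |r (t - x)| :=
          setIntegral_le_integral (hint.comp_sub_left t).abs
            (Eventually.of_forall fun _ => abs_nonneg _)
      _ = ∫ x, |r x| := integral_sub_left_eq_self (fun x => |r x|) volume t

theorem add_pow_le_exp_one_mul_pow {x y : ℝ} {n : ℕ} (hx : 0 < x) (hxy : 0 ≤ x + y)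
    (h : n * y ≤ x) : (x + y) ^ n ≤ Real.exp 1 * x ^ n := by
  have hbase : x + y ≤ Real.exp (y / x) * x :=
    calc x + y = (y / x + 1) * x := by field_simp; ring
      _ ≤ Real.exp (y / x) * x := by gcongr; exact Real.add_one_le_exp _
  calc (x + y) ^ n ≤ (Real.exp (y / x) * x) ^ n := by gcongr
    _ = Real.exp (n * (y / x)) * x ^ n := by rw [mul_pow, ← Real.exp_nat_mul]
    _ ≤ Real.exp 1 * x ^ n := by
      gcongr
      rwa [← mul_div_assoc, div_le_one hx]

theorem half_le_add_nat_mul {m N : ℕ} {s T : ℝ} (hm : m ≤ N) (hN : 2 * N * |c| ≤ T)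
    (hs : T ≤ s) : T / 2 ≤ s + m * c := by
  have h : -(N * |c|) ≤ m * c :=
    calc -(N * |c|) ≤ -(m * |c|) := by gcongr
      _ = m * -|c| := (mul_neg _ _).symm
      _ ≤ m * c := by gcongr; exact neg_abs_le c
  linarith

theorem convPow_rampMeasure_real_Iic_of_nonneg (ha : 0 ≤ a) (c : ℝ) (n : ℕ) {t : ℝ}
    (ht : 0 ≤ t) :
    (convPow (rampMeasure a c) n).real (Iic t)
      = a ^ n / n.factorial * max (t + n * c) 0 ^ n := by
  rcases eq_or_ne n 0 with rfl | hn
  · simp [convPow, measureReal_def, Measure.dirac_apply' _ measurableSet_Iic, ht]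
  · exact convPow_rampMeasure_real_Iic ha c hn t

theorem convPow_rampMeasure_real_Iic_add_le {d s T : ℝ} {n N : ℕ} (ha : 0 < a) (hd : 0 ≤ d)
    (hT : 0 < T) (hN : 2 * N * (d + |c|) ≤ T) (hn : n < N) (hs : T ≤ s) :
    (convPow (rampMeasure a c) n).real (Iic (s + d))
      ≤ 2 * Real.exp 1 / a * (N / T) * (convPow (rampMeasure a c) (n + 1)).real (Iic s) := by
  have hNd : (0 : ℝ) ≤ N * d := by positivity
  have hnN : ((n + 1 : ℕ) : ℝ) ≤ N := by exact_mod_cast hn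
  rw [convPow_rampMeasure_real_Iic_of_nonneg ha.le _ _ (by linarith),
    convPow_rampMeasure_real_Iic_of_nonneg ha.le _ _ (by linarith)]
  set x := s + (n + 1 : ℕ) * c with hx
  have hxT : T / 2 ≤ x := half_le_add_nat_mul hn (by linarith) hs
  have hx0 : 0 < x := by linarith
  have hpow : max (s + d + n * c) 0 ^ n ≤ Real.exp 1 * x ^ n := by
    have hshift : max (s + d + n * c) 0 ≤ x + (d + |c|) :=
      max_le (by rw [hx]; push_cast; linarith [neg_abs_le c]) (by positivity)
    have hsmall : n * (d + |c|) ≤ x :=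
      calc n * (d + |c|) ≤ N * (d + |c|) := by gcongr
        _ ≤ x := by linarith
    exact (pow_le_pow_left₀ (le_max_right _ _) hshift n).trans
      (add_pow_le_exp_one_mul_pow hx0 (by positivity) hsmall)
  have hratio : (n + 1 : ℕ) / x ≤ 2 * (N / T) :=
    calc (n + 1 : ℕ) / x ≤ N / (T / 2) := by gcongr
      _ = 2 * (N / T) := by field_simp
  rw [max_eq_left hx0.le]
  calc a ^ n / n.factorial * max (s + d + n * c) 0 ^ n
      ≤ a ^ n / n.factorial * (Real.exp 1 * x ^ n) := by gcongr
    _ = Real.exp 1 / a * ((n + 1 : ℕ) / x) * (a ^ (n + 1) / (n + 1).factorial * x ^ (n + 1)) := by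
        rw [Nat.factorial_succ]
        push_cast
        field_simp
        ring
    _ ≤ Real.exp 1 / a * (2 * (N / T)) * (a ^ (n + 1) / (n + 1).factorial * x ^ (n + 1)) := by
        gcongr
    _ = 2 * Real.exp 1 / a * (N / T) * (a ^ (n + 1) / (n + 1).factorial * x ^ (n + 1)) := by ring

end Ramp

section Remainder

variable {μ ρ ρ₁ ρ₂ : Measure ℝ} {f r : ℝ → ℝ} {a b γ : ℝ}

theorem lintegral_Ioi_measure_Ioi (ρ : Measure ℝ) :
    ∫⁻ t in Ioi 0, ρ (Ioi t) = ∫⁻ y, ENNReal.ofReal y ∂ρ := by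
  have h := lintegral_eq_lintegral_meas_lt ρ (f := fun y => max y 0)
    (Eventually.of_forall fun y => le_max_right y 0) (by fun_prop)
  simp only [ENNReal.ofReal_max, ENNReal.ofReal_zero, zero_le, max_eq_left] at h
  rw [h]
  refine setLIntegral_congr_fun measurableSet_Ioi fun t ht => ?_
  congr 1
  ext y
  simp [(mem_Ioi.1 ht).not_gt]

theorem integrableOn_real_Ioi (hρ : ∫⁻ y, ENNReal.ofReal y ∂ρ < ⊤) :
    IntegrableOn (fun t => ρ.real (Ioi t)) (Ioi 0) := by
  have hanti : Antitone fun t => ρ (Ioi t) := fun _ _ h => measure_mono (Ioi_subset_Ioi h)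
  exact integrable_toReal_of_lintegral_ne_top hanti.measurable.aemeasurable
    (lintegral_Ioi_measure_Ioi ρ ▸ hρ.ne)

/-- The constant is `γ = ρ₁(ℝ) - ρ₂(ℝ)`, and the remainder is `ρ₂(t, ∞) - ρ₁(t, ∞)`. -/
theorem exists_integrableOn_real_Iic_sub_linear [IsFiniteMeasure ρ₁] [IsFiniteMeasure ρ₂]
    (ha : 0 ≤ a)
    (hρ : μ + ρ₂ = ρ₁ + ENNReal.ofReal a • volume.restrict (Ioi 0))
    (hρ₁ : ∫⁻ y, ENNReal.ofReal y ∂ρ₁ < ⊤) (hρ₂ : ∫⁻ y, ENNReal.ofReal y ∂ρ₂ < ⊤) :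
    ∃ γ, IntegrableOn (fun t => μ.real (Iic t) - (a * t + γ)) (Ioi 0) := by
  refine ⟨ρ₁.real univ - ρ₂.real univ, ((integrableOn_real_Ioi hρ₂).sub
    (integrableOn_real_Ioi hρ₁)).congr_fun (fun t ht => ?_) measurableSet_Ioi⟩
  have hIic : μ.real (Iic t) + ρ₂.real (Iic t) = ρ₁.real (Iic t) + a * t := by
    have hρ' : μ + ρ₂ = ρ₁ + rampMeasure a 0 := by rw [hρ, rampMeasure, neg_zero]
    have hramp := isLeftBounded_rampMeasure a 0
    have hfin : μ (Iic t) + ρ₂ (Iic t) ≠ ⊤ := by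
      rw [← Measure.add_apply, hρ', Measure.add_apply]
      exact ENNReal.add_ne_top.2 ⟨measure_ne_top _ _, hramp.measure_Iic_ne_top t⟩
    rw [← measureReal_add_apply (ENNReal.add_ne_top.1 hfin).1, hρ',
      measureReal_add_apply (h₂ := hramp.measure_Iic_ne_top t), rampMeasure_real_Iic ha, add_zero,
      max_eq_left (mem_Ioi.1 ht).le]
  have h₁ := measureReal_compl (μ := ρ₁) (measurableSet_Iic (a := t))
  have h₂ := measureReal_compl (μ := ρ₂) (measurableSet_Iic (a := t))
  rw [compl_Iic] at h₁ h₂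
  simp only [Pi.sub_apply]
  linarith

theorem tendsto_intervalIntegral_add_of_integrableOn_Ioi (hr : IntegrableOn r (Ioi b)) (h : ℝ) :
    Tendsto (fun t => ∫ x in t..t + h, r x) atTop (𝓝 0) := by
  have hlim := intervalIntegral_tendsto_integral_Ioi b hr tendsto_id
  have hsub := (hlim.comp (tendsto_atTop_add_const_right atTop h tendsto_id)).sub hlim
  rw [sub_self] at hsub
  refine hsub.congr' ?_
  filter_upwards [eventually_ge_atTop b, eventually_ge_atTop (b - h)] with t ht hth
  have hint : ∀ {s}, b ≤ s → IntervalIntegrable r volume b s := fun hs =>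
    (intervalIntegrable_iff_integrableOn_Ioc_of_le hs).2 (hr.mono_set Ioc_subset_Ioi_self)
  exact intervalIntegral.integral_interval_sub_left (hint (by simpa using by linarith)) (hint ht)

theorem mul_le_intervalIntegral_sub_linear (hf : Monotone f) (ha : 0 ≤ a) (γ t : ℝ) {h : ℝ}
    (hh : 0 ≤ h) :
    h * (f t - (a * t + γ) - a * h) ≤ ∫ x in t..t + h, (f x - (a * x + γ)) :=
  calc h * (f t - (a * t + γ) - a * h) = ∫ _ in t..t + h, (f t - (a * t + γ) - a * h) := by
        rw [intervalIntegral.integral_const, smul_eq_mul, add_sub_cancel_left]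
    _ ≤ ∫ x in t..t + h, (f x - (a * x + γ)) :=
        intervalIntegral.integral_mono_on (by linarith) intervalIntegrable_const
          (hf.intervalIntegrable.sub (Continuous.intervalIntegrable (by fun_prop) _ _))
          fun _ hx => by nlinarith [hf hx.1, hx.2]

theorem intervalIntegral_sub_linear_le_mul (hf : Monotone f) (ha : 0 ≤ a) (γ t : ℝ) {h : ℝ}
    (hh : 0 ≤ h) :
    ∫ x in t - h..t, (f x - (a * x + γ)) ≤ h * (f t - (a * t + γ) + a * h) :=
  calc ∫ x in t - h..t, (f x - (a * x + γ))
      ≤ ∫ _ in t - h..t, (f t - (a * t + γ) + a * h) :=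
        intervalIntegral.integral_mono_on (by linarith)
          (hf.intervalIntegrable.sub (Continuous.intervalIntegrable (by fun_prop) _ _))
          intervalIntegrable_const fun _ hx => by nlinarith [hf hx.2, hx.1]
    _ = h * (f t - (a * t + γ) + a * h) := by
        rw [intervalIntegral.integral_const, smul_eq_mul, sub_sub_cancel]

theorem tendsto_sub_mul_of_integrableOn (hf : Monotone f) (ha : 0 ≤ a)
    (hint : IntegrableOn (fun t => f t - (a * t + γ)) (Ioi b)) :
    Tendsto (fun t => f t - a * t) atTop (𝓝 γ) := by
  refine Metric.tendsto_atTop'.2 fun ε hε => ?_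
  set h := ε / (2 * (a + 1)) with hdef
  have hh : 0 < h := by positivity
  have hah : a * h < ε / 2 := by
    rw [hdef, mul_div_assoc', div_lt_div_iff₀ (by positivity) two_pos]
    nlinarith
  have htail := tendsto_intervalIntegral_add_of_integrableOn_Ioi hint h
  have hpast := htail.comp (tendsto_atTop_add_const_right atTop (-h) tendsto_id)
  have hlt : 0 < h * (ε / 2) := by positivity
  obtain ⟨t₀, ht₀⟩ := eventually_atTop.1 <|
    (htail.eventually_lt_const hlt).and (hpast.eventually_const_lt (neg_lt_zero.2 hlt))
  refine ⟨t₀, fun t ht => ?_⟩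
  obtain ⟨hupper, hlower⟩ := ht₀ t ht.le
  simp only [Function.comp_apply, id_eq, ← sub_eq_add_neg, sub_add_cancel] at hlower
  have hr_lt := lt_of_mul_lt_mul_left
    ((mul_le_intervalIntegral_sub_linear hf ha γ t hh.le).trans_lt hupper) hh.le
  have hlt_r := lt_of_mul_lt_mul_left
    ((mul_neg h _).trans_lt (hlower.trans_le
      (intervalIntegral_sub_linear_le_mul hf ha γ t hh.le))) hh.le
  rw [Real.dist_eq, abs_lt]
  constructor <;> linarith

end Remainder

section Comparison

variable {μ κ : Measure ℝ} {a b c d : ℝ}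

theorem IsLeftBounded.exists_real_Iic_sub_eq_zero (hμ : IsLeftBounded μ) (hκ : IsLeftBounded κ)
    (m : ℝ) : ∃ d, 0 ≤ d ∧ ∀ t < m - d, μ.real (Iic t) - κ.real (Iic t) = 0 := by
  obtain ⟨x, hx⟩ := hμ.exists_measure_Iic_eq_zero
  obtain ⟨y, hy⟩ := hκ.exists_measure_Iic_eq_zero
  refine ⟨max (m - min x y) 0, le_max_right _ _, fun t ht => ?_⟩
  have hlt : t < min x y := by linarith [le_max_left (m - min x y) 0]
  have hμt := measure_mono_null (Iic_subset_Iic.2 (hlt.le.trans (min_le_left _ _))) hx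
  have hκt := measure_mono_null (Iic_subset_Iic.2 (hlt.le.trans (min_le_right _ _))) hy
  rw [measureReal_def, measureReal_def, hμt, hκt, sub_self]

theorem IsLeftBounded.integrable_real_Iic_sub_real_Iic (hμ : IsLeftBounded μ)
    (hκ : IsLeftBounded κ)
    (hint : IntegrableOn (fun t => μ.real (Iic t) - κ.real (Iic t)) (Ioi b)) :
    Integrable fun t => μ.real (Iic t) - κ.real (Iic t) := by
  obtain ⟨d, -, hd⟩ := hμ.exists_real_Iic_sub_eq_zero hκ 0
  refine integrable_iff_integrableAtFilter_atBot_atTop.2 ⟨⟨⟨Iio (0 - d), Iio_mem_atBot _,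
    integrableOn_zero.congr_fun (fun t ht => (hd t ht).symm) measurableSet_Iio⟩,
    ⟨Ioi b, Ioi_mem_atTop b, hint⟩⟩,
    hμ.real_Iic_mono.locallyIntegrable.sub hκ.real_Iic_mono.locallyIntegrable⟩

theorem exists_cdfClose_of_tendsto {l : ℝ} (hμ : IsLeftBounded μ) (hκ : IsLeftBounded κ)
    (hzero : ∀ t < -d, μ.real (Iic t) - κ.real (Iic t) = 0)
    (hlim : Tendsto (fun t => μ.real (Iic t) - κ.real (Iic t)) atTop (𝓝 l)) :
    ∃ W, CdfClose W d μ κ := by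
  obtain ⟨T, hT⟩ := eventually_atTop.1 (hlim.abs.eventually_le_const (lt_add_one |l|))
  refine ⟨μ.real (Iic T) + κ.real (Iic T) + (|l| + 1), fun t => ?_⟩
  have hμ0 : ∀ s, 0 ≤ μ.real (Iic s) := fun _ => measureReal_nonneg
  have hκ0 : ∀ s, 0 ≤ κ.real (Iic s) := fun _ => measureReal_nonneg
  rcases lt_or_ge t (-d) with ht | ht
  · rw [hzero t ht, abs_zero, indicator_of_notMem (notMem_Ici.2 ht)]
  rw [indicator_of_mem (mem_Ici.2 ht)]
  rcases le_total T t with hTt | htT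
  · linarith [hT t hTt, hμ0 T, hκ0 T]
  · refine abs_le.2 ⟨?_, ?_⟩ <;>
      linarith [hμ0 t, hκ0 t, hμ.real_Iic_mono htT, hκ.real_Iic_mono htT, abs_nonneg l]

theorem exists_cdfClose_rampMeasure [SFinite μ] (ha : 0 ≤ a) (hμ : IsLeftBounded μ)
    (hint : IntegrableOn (fun t => μ.real (Iic t) - a * (t + c)) (Ioi b)) :
    ∃ W K d, 0 ≤ d ∧ CdfClose W d μ (rampMeasure a c) ∧
      CdfClose K d (μ ∗ rampMeasure a c) (rampMeasure a c ∗ rampMeasure a c) := by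
  have hκ := isLeftBounded_rampMeasure a c
  have hramp : ∀ t, -c ≤ t → (rampMeasure a c).real (Iic t) = a * (t + c) := fun t ht => by
    rw [rampMeasure_real_Iic ha, max_eq_left (by linarith)]
  obtain ⟨d, hd, hzero⟩ := hμ.exists_real_Iic_sub_eq_zero hκ |c|
  have hlim : Tendsto (fun t => μ.real (Iic t) - (rampMeasure a c).real (Iic t)) atTop (𝓝 0) := by
    have h := (tendsto_sub_mul_of_integrableOn (γ := a * c) hμ.real_Iic_mono ha
      (by simpa only [mul_add] using hint)).sub_const (a * c)
    rw [sub_self] at h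
    refine h.congr' ?_
    filter_upwards [eventually_ge_atTop (-c)] with t ht
    rw [hramp t ht]
    ring
  have hint' := hμ.integrable_real_Iic_sub_real_Iic hκ (b := max b (-c)) <|
    (hint.mono_set (Ioi_subset_Ioi (le_max_left _ _))).congr_fun
      (fun t ht => by rw [hramp t ((le_max_right _ _).trans (mem_Ioi.1 ht).le)]) measurableSet_Ioi
  obtain ⟨W, hW⟩ := exists_cdfClose_of_tendsto (d := d) hμ hκ
    (fun t ht => hzero t (by linarith [abs_nonneg c])) hlim
  exact ⟨W, _, d, hd, hW, cdfClose_conv_rampMeasure ha hμ hint'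
    fun t ht => hzero t (by linarith [le_abs_self c])⟩

end Comparison

section Asymptotics

variable {a b c : ℝ} {j : ℝ → ℕ}

theorem neg_two_mul_sq_le_log_one_add_sub {x : ℝ} (hx : -(1 / 2) ≤ x) :
    -2 * x ^ 2 ≤ Real.log (1 + x) - x := by
  have hpos : 0 < 1 + x := by linarith
  have hinv : 1 - (1 + x)⁻¹ - (-2 * x ^ 2 + x) = x ^ 2 * (1 + 2 * x) / (1 + x) := by
    field_simp
    ring
  have hnonneg : 0 ≤ x ^ 2 * (1 + 2 * x) / (1 + x) :=
    div_nonneg (mul_nonneg (sq_nonneg _) (by linarith)) hpos.le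
  linarith [Real.one_sub_inv_le_log_of_pos hpos]

theorem tendsto_one_add_pow_div_exp {ι : Type*} {l : Filter ι} {n : ι → ℕ} {x : ι → ℝ}
    (hx : Tendsto x l (𝓝 0)) (hnx : Tendsto (fun i => n i * x i ^ 2) l (𝓝 0)) :
    Tendsto (fun i => (1 + x i) ^ n i / Real.exp (n i * x i)) l (𝓝 1) := by
  have hpos : ∀ᶠ i in l, -(1 / 2) < x i := hx.eventually_const_lt (by norm_num)
  have hlog : Tendsto (fun i => n i * (Real.log (1 + x i) - x i)) l (𝓝 0) := by
    have hlower : Tendsto (fun i => -2 * (n i * x i ^ 2)) l (𝓝 0) := by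
      simpa only [mul_zero] using hnx.const_mul (-2)
    refine tendsto_of_tendsto_of_tendsto_of_le_of_le' hlower tendsto_const_nhds ?_ ?_
    · filter_upwards [hpos] with i hi
      calc -2 * (n i * x i ^ 2) = n i * (-2 * x i ^ 2) := by ring
        _ ≤ n i * (Real.log (1 + x i) - x i) := by
          gcongr
          exact neg_two_mul_sq_le_log_one_add_sub hi.le
    · filter_upwards [hpos] with i hi
      refine mul_nonpos_of_nonneg_of_nonpos (Nat.cast_nonneg _) ?_
      linarith [Real.log_le_sub_one_of_pos (show 0 < 1 + x i by linarith)]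
  have hexp := (Real.continuous_exp.tendsto 0).comp hlog
  rw [Real.exp_zero] at hexp
  refine hexp.congr' ?_
  filter_upwards [hpos] with i hi
  rw [Function.comp_apply, mul_sub, Real.exp_sub, Real.exp_nat_mul,
    Real.exp_log (show 0 < 1 + x i by linarith)]

theorem tendsto_natCast_div_of_isLittleO_rpow
    (hj : (fun t => (j t : ℝ)) =o[atTop] fun t : ℝ => t ^ ((2 : ℝ) / 3)) :
    Tendsto (fun t => (j t : ℝ) / t) atTop (𝓝 0) := by
  refine (hj.trans_isBigO (.of_bound' ?_)).tendsto_div_nhds_zero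
  filter_upwards [eventually_ge_atTop 1] with t ht
  rw [Real.norm_of_nonneg (by positivity), Real.norm_of_nonneg (by positivity)]
  exact Real.rpow_le_self_of_one_le ht (by norm_num)

theorem tendsto_natCast_pow_three_div_sq_of_isLittleO_rpow
    (hj : (fun t => (j t : ℝ)) =o[atTop] fun t : ℝ => t ^ ((2 : ℝ) / 3)) :
    Tendsto (fun t => (j t : ℝ) ^ 3 / t ^ 2) atTop (𝓝 0) := by
  refine (hj.pow three_pos).tendsto_div_nhds_zero.congr' ?_
  filter_upwards [eventually_ge_atTop 0] with t ht
  rw [← Real.rpow_mul_natCast ht]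
  norm_num

theorem tendsto_convPow_rampMeasure_div (ha : 0 < a) (c : ℝ)
    (hj : Tendsto (fun t => (j t : ℝ) / t) atTop (𝓝 0))
    (hj3 : Tendsto (fun t => (j t : ℝ) ^ 3 / t ^ 2) atTop (𝓝 0)) :
    Tendsto (fun t => (convPow (rampMeasure a c) (j t)).real (Iic t) /
        (a ^ j t * t ^ j t / (j t).factorial * Real.exp (c * (j t : ℝ) ^ 2 / t)))
      atTop (𝓝 1) := by
  have hx : Tendsto (fun t => j t / t * c) atTop (𝓝 0) := by
    simpa only [zero_mul] using hj.mul_const c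
  have hjx : Tendsto (fun t => j t * (j t / t * c) ^ 2) atTop (𝓝 0) := by
    have h := hj3.mul_const (c ^ 2)
    rw [zero_mul] at h
    exact h.congr fun t => by ring
  refine (tendsto_one_add_pow_div_exp hx hjx).congr' ?_
  filter_upwards [eventually_gt_atTop 0, hx.eventually_const_lt neg_one_lt_zero] with t ht hxt
  have hfactor : t + j t * c = t * (1 + j t / t * c) := by field_simp
  rw [convPow_rampMeasure_real_Iic_of_nonneg ha.le _ _ ht.le, hfactor,
    max_eq_left (mul_nonneg ht.le (by linarith)), mul_pow,
    show j t * (j t / t * c) = c * (j t : ℝ) ^ 2 / t by ring]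
  field_simp

theorem tendsto_convPow_div_convPow_rampMeasure {μ : Measure ℝ} [SFinite μ] (ha : 0 < a)
    (hμ : IsLeftBounded μ)
    (hint : IntegrableOn (fun t => μ.real (Iic t) - a * (t + c)) (Ioi b))
    (hj : Tendsto (fun t => (j t : ℝ) / t) atTop (𝓝 0))
    (hj3 : Tendsto (fun t => (j t : ℝ) ^ 3 / t ^ 2) atTop (𝓝 0)) :
    Tendsto (fun t =>
      (convPow μ (j t)).real (Iic t) / (convPow (rampMeasure a c) (j t)).real (Iic t))
      atTop (𝓝 1) := by
  obtain ⟨W, K, d, hd, hW, hK⟩ := exists_cdfClose_rampMeasure ha.le hμ hint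
  set B := 2 * Real.exp 1 / a
  set q : ℝ → ℝ := fun t => j t * (K * (2 * (B * (j t / t)) ^ 2)) + W * (2 * (B * (j t / t)))
    with hq
  have hq0 : Tendsto q atTop (𝓝 0) := by
    have h := (hj3.const_mul (2 * K * B ^ 2)).add (hj.const_mul (2 * W * B))
    rw [mul_zero, mul_zero, add_zero] at h
    exact h.congr fun t => by rw [hq]; ring
  have hsmall : ∀ᶠ t in atTop, 2 * j t * (d + |c|) ≤ t := by
    have h := hj.const_mul (2 * (d + |c|))
    rw [mul_zero] at h
    filter_upwards [h.eventually_le_const one_pos, eventually_gt_atTop 0] with t ht ht0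
    rw [mul_div_assoc', div_le_one ht0] at ht
    linarith
  refine tendsto_iff_dist_tendsto_zero.2 (squeeze_zero' (.of_forall fun _ => dist_nonneg) ?_ hq0)
  filter_upwards [eventually_gt_atTop 0, hsmall, hq0.eventually_le_const one_pos] with t ht hjt hqt
  have hpos : 0 < (convPow (rampMeasure a c) (j t)).real (Iic t) := by
    have h : t / 2 ≤ t + j t * c := half_le_add_nat_mul le_rfl (by nlinarith) le_rfl
    rw [convPow_rampMeasure_real_Iic_of_nonneg ha.le _ _ ht.le, max_eq_left (by linarith)]
    have : 0 < t + j t * c := by linarith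
    positivity
  have h := abs_mixedCdf_sub_le hμ (isLeftBounded_rampMeasure a c) hW hK hd (by positivity)
    (fun n hn s hs => convPow_rampMeasure_real_Iic_add_le ha hd ht hjt hn hs) le_rfl hqt
    le_rfl (add_zero (j t)) le_rfl
  rw [mixedCdf_zero_right] at h
  rwa [Real.dist_eq, div_sub_one hpos.ne', abs_div, abs_of_pos hpos, div_le_iff₀ hpos]

end Asymptotics

section LebesgueStieltjes

variable {f : ℝ → ℝ}

theorem lsMeasure_Iic (hmono : Monotone f) (hrc : ∀ x, ContinuousWithinAt f (Ici x) x)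
    (hbot : Tendsto f atBot (𝓝 0)) (t : ℝ) : lsMeasure f (Iic t) = ENNReal.ofReal (f t) := by
  have hfun : ⇑hmono.stieltjesFunction = f := funext fun x =>
    (hmono.stieltjesFunction_eq x).trans <|
      hmono.continuousWithinAt_Ioi_iff_rightLim_eq.1 ((hrc x).mono Ioi_subset_Ici_self)
  rw [lsMeasure, dif_pos hmono, StieltjesFunction.measure_Iic _ (hfun.symm ▸ hbot), hfun, sub_zero]

theorem lsMeasure_real_Iic (hmono : Monotone f) (hrc : ∀ x, ContinuousWithinAt f (Ici x) x)
    (hbot : Tendsto f atBot (𝓝 0)) (t : ℝ) : (lsMeasure f).real (Iic t) = f t := by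
  rw [measureReal_def, lsMeasure_Iic hmono hrc hbot,
    ENNReal.toReal_ofReal (hmono.le_of_tendsto hbot t)]

theorem tendsto_atBot_zero_of_forall_lt_eq_zero {b : ℝ} (hneg : ∀ t < b, f t = 0) :
    Tendsto f atBot (𝓝 0) :=
  tendsto_const_nhds.congr' ((eventually_lt_atBot b).mono fun t ht => (hneg t ht).symm)

theorem isLeftBounded_lsMeasure {b : ℝ} (hmono : Monotone f)
    (hrc : ∀ x, ContinuousWithinAt f (Ici x) x) (hneg : ∀ t < b, f t = 0) :
    IsLeftBounded (lsMeasure f) := by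
  have hIic := lsMeasure_Iic hmono hrc (tendsto_atBot_zero_of_forall_lt_eq_zero hneg)
  exact ⟨fun t => hIic t ▸ ENNReal.ofReal_ne_top,
    ⟨b - 1, by rw [hIic, hneg _ (sub_one_lt b), ENNReal.ofReal_zero]⟩⟩

end LebesgueStieltjes

theorem convolution_powers_finite_total_variation_general {μ : Measure ℝ} [SFinite μ]
    (hμ : IsLeftBounded μ) {a γ b : ℝ} (ha : 0 < a)
    (hint : IntegrableOn (fun t => μ.real (Iic t) - (a * t + γ)) (Ioi b)) {j : ℝ → ℕ}
    (hjo : (fun t : ℝ => (j t : ℝ)) =o[atTop] fun t : ℝ => t ^ ((2 : ℝ) / 3)) :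
    Tendsto (fun t => μ.real (Iic t) - a * t) atTop (𝓝 γ) ∧
      Tendsto (fun t => (convPow μ (j t)).real (Iic t) /
          (a ^ j t * t ^ j t / (j t).factorial * Real.exp (γ * (j t : ℝ) ^ 2 / (a * t))))
        atTop (𝓝 1) := by
  refine ⟨tendsto_sub_mul_of_integrableOn hμ.real_Iic_mono ha.le hint, ?_⟩
  have hj := tendsto_natCast_div_of_isLittleO_rpow hjo
  have hj3 := tendsto_natCast_pow_three_div_sq_of_isLittleO_rpow hjo
  have hlinear : ∀ t, a * t + γ = a * (t + γ / a) := fun t => by field_simp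
  simp only [hlinear] at hint
  have hratio := tendsto_convPow_div_convPow_rampMeasure ha hμ hint hj hj3
  have hramp := tendsto_convPow_rampMeasure_div ha (γ / a) hj hj3
  have hprod := hratio.mul hramp
  rw [one_mul] at hprod
  refine hprod.congr' ?_
  filter_upwards [hramp.eventually_ne one_ne_zero] with t ht
  rw [div_mul_div_cancel₀ (div_ne_zero_iff.1 ht).1, div_mul_eq_mul_div γ, div_div (γ * _)]

/-- **Proposition 3.4.** Let `f` be nondecreasing, right-continuous, vanishing on the
negative half-line, with `ε(t) = f(t) - a t` satisfying `∫_{[0,∞)} y |dε(y)| < ∞`;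
this is encoded by a Jordan-type decomposition `dε = dρ₁ - dρ₂` of the
Lebesgue–Stieltjes measure of `f`, with finite measures `ρ₁, ρ₂` carried by `[0,∞)`
having finite first moments. Then `γ₀ = lim (f(t) - a t)` exists in `ℝ` and for any
integer-valued `j = j(t) ≥ 1` with `j(t) = o(t^{2/3})`,
`f^{∗(j(t))}(t) ~ (a^{j(t)} t^{j(t)} / j(t)!) exp(γ₀ j(t)²/(a t))` as `t → ∞`. -/
theorem convolution_powers_finite_total_variation
    (f : ℝ → ℝ) (hf0 : ∀ t, 0 ≤ f t) (hmono : Monotone f)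
    (hrc : ∀ x, ContinuousWithinAt f (Ici x) x)
    (hneg : ∀ t < (0 : ℝ), f t = 0)
    (a : ℝ) (ha : 0 < a)
    (hvar : ∃ ρ₁ ρ₂ : Measure ℝ, IsFiniteMeasure ρ₁ ∧ IsFiniteMeasure ρ₂ ∧
      ρ₁ (Iio 0) = 0 ∧ ρ₂ (Iio 0) = 0 ∧
      lsMeasure f + ρ₂ = ρ₁ + ENNReal.ofReal a • volume.restrict (Ioi 0) ∧
      (∫⁻ y, ENNReal.ofReal y ∂ρ₁) < ⊤ ∧ (∫⁻ y, ENNReal.ofReal y ∂ρ₂) < ⊤)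
    (j : ℝ → ℕ) (hj1 : ∀ t, 1 ≤ j t)
    (hjo : (fun t : ℝ => (j t : ℝ)) =o[atTop] fun t : ℝ => t ^ ((2 : ℝ) / 3)) :
    ∃ γ₀ : ℝ,
      Tendsto (fun t : ℝ => f t - a * t) atTop (𝓝 γ₀) ∧
      Tendsto
        (fun t : ℝ =>
          convPowFun f (j t) t /
            (a ^ j t * t ^ j t / (Nat.factorial (j t) : ℝ) *
              Real.exp (γ₀ * (j t : ℝ) ^ 2 / (a * t))))
        atTop (𝓝 1) := by
  obtain ⟨ρ₁, ρ₂, hρ₁fin, hρ₂fin, -, -, hρ, hρ₁, hρ₂⟩ := hvar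
  have hcdf := lsMeasure_real_Iic hmono hrc (tendsto_atBot_zero_of_forall_lt_eq_zero hneg)
  have hμ := isLeftBounded_lsMeasure hmono hrc hneg
  obtain ⟨γ₀, hint⟩ := exists_integrableOn_real_Iic_sub_linear ha.le hρ hρ₁ hρ₂
  obtain ⟨hlim, hpow⟩ := convolution_powers_finite_total_variation_general hμ ha hint hjo
  simp only [hcdf] at hlim
  exact ⟨γ₀, hlim, hpow⟩

end
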